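/- Let 0 ≤ θ < 45°, let u ∈ ℝ² be a unit vector, and let T ⊆ ℝ² be a set of points such that for all distinct P, Q ∈ T, the undirected angle between the vector Q − P and the line spanned by u is at most θ (equivalently, |⟨Q − P, u⟩| ≥ ‖Q − P‖·cos θ). Then for all pairwise distinct A, B, C ∈ T, either ∠ABC ≤ 2θ or ∠ABC ≥ 180° − 2θ. -/

import Mathlib

open EuclideanGeometry Real
open scoped RealInnerProductSpace

/-!
The angle between lines through the origin satisfies the triangle inequality, because each vector
may be replaced by its negative so as to realise the angle of its line with a fixed vector. Hence
two lines within `θ` of the line spanned by `u` are within `2 * θ` of each other, and the angle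
between vectors spanning them is within `2 * θ` of `0` or `π`.
-/

section LineAngle

variable {V : Type*} [NormedAddCommGroup V] [InnerProductSpace ℝ V]

/-- The undirected angle in `[0, π / 2]` between the lines spanned by `x` and `y`, used to measure
how far a segment is from a fixed direction. As for `InnerProductGeometry.angle`, the value is
`π / 2` if one of the vectors is zero. -/
noncomputable def lineAngle (x y : V) : ℝ :=
  min (InnerProductGeometry.angle x y) (π - InnerProductGeometry.angle x y)

theorem lineAngle_comm (x y : V) : lineAngle x y = lineAngle y x := by
  rw [lineAngle, lineAngle, InnerProductGeometry.angle_comm]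

theorem lineAngle_neg_right (x y : V) : lineAngle x (-y) = lineAngle x y := by
  rw [lineAngle, lineAngle, InnerProductGeometry.angle_neg_right, sub_sub_cancel, min_comm]

theorem lineAngle_neg_left (x y : V) : lineAngle (-x) y = lineAngle x y := by
  rw [lineAngle_comm, lineAngle_neg_right, lineAngle_comm]

theorem lineAngle_le_angle (x y : V) : lineAngle x y ≤ InnerProductGeometry.angle x y :=
  min_le_left _ _

theorem lineAngle_le_pi (x y : V) : lineAngle x y ≤ π :=
  (lineAngle_le_angle x y).trans (InnerProductGeometry.angle_le_pi x y)

theorem lineAngle_eq_angle_or_eq_angle_neg_right (x y : V) :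
    lineAngle x y = InnerProductGeometry.angle x y ∨
      lineAngle x y = InnerProductGeometry.angle x (-y) := by
  rw [InnerProductGeometry.angle_neg_right]
  exact min_choice _ _

theorem lineAngle_eq_angle_or_eq_angle_neg_left (x y : V) :
    lineAngle x y = InnerProductGeometry.angle x y ∨
      lineAngle x y = InnerProductGeometry.angle (-x) y := by
  rw [InnerProductGeometry.angle_neg_left]
  exact min_choice _ _

theorem lineAngle_le_angle_add_lineAngle (x y z : V) :
    lineAngle x z ≤ InnerProductGeometry.angle x y + lineAngle y z := by
  rcases lineAngle_eq_angle_or_eq_angle_neg_right y z with h | h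
  · calc
      lineAngle x z ≤ InnerProductGeometry.angle x z := lineAngle_le_angle x z
      _ ≤ InnerProductGeometry.angle x y + InnerProductGeometry.angle y z :=
        InnerProductGeometry.angle_le_angle_add_angle x y z
      _ = InnerProductGeometry.angle x y + lineAngle y z := by rw [h]
  · calc
      lineAngle x z = lineAngle x (-z) := (lineAngle_neg_right x z).symm
      _ ≤ InnerProductGeometry.angle x (-z) := lineAngle_le_angle x (-z)
      _ ≤ InnerProductGeometry.angle x y + InnerProductGeometry.angle y (-z) :=
        InnerProductGeometry.angle_le_angle_add_angle x y (-z)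
      _ = InnerProductGeometry.angle x y + lineAngle y z := by rw [h]

theorem lineAngle_le_lineAngle_add_lineAngle (x y z : V) :
    lineAngle x z ≤ lineAngle x y + lineAngle y z := by
  rcases lineAngle_eq_angle_or_eq_angle_neg_left x y with h | h
  · rw [h]
    exact lineAngle_le_angle_add_lineAngle x y z
  · rw [h, ← lineAngle_neg_left x z]
    exact lineAngle_le_angle_add_lineAngle (-x) y z

theorem lineAngle_le_iff {x y : V} {θ : ℝ} :
    lineAngle x y ≤ θ ↔
      InnerProductGeometry.angle x y ≤ θ ∨ π - θ ≤ InnerProductGeometry.angle x y := by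
  rw [lineAngle, min_le_iff, sub_le_comm]

theorem cos_lineAngle (x y : V) : cos (lineAngle x y) = |cos (InnerProductGeometry.angle x y)| := by
  have angle_mem : InnerProductGeometry.angle x y ∈ Set.Icc 0 π :=
    ⟨InnerProductGeometry.angle_nonneg x y, InnerProductGeometry.angle_le_pi x y⟩
  have supplement_mem : π - InnerProductGeometry.angle x y ∈ Set.Icc 0 π := by
    rw [← InnerProductGeometry.angle_neg_right]
    exact ⟨InnerProductGeometry.angle_nonneg x (-y), InnerProductGeometry.angle_le_pi x (-y)⟩
  calc
    cos (lineAngle x y) =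
        max (cos (InnerProductGeometry.angle x y)) (cos (π - InnerProductGeometry.angle x y)) :=
      strictAntiOn_cos.antitoneOn.map_min angle_mem supplement_mem
    _ = |cos (InnerProductGeometry.angle x y)| := by rw [cos_pi_sub, abs_eq_max_neg]

theorem cos_lineAngle_mul_norm_mul_norm (x y : V) :
    cos (lineAngle x y) * (‖x‖ * ‖y‖) = |⟪x, y⟫| := by
  rw [cos_lineAngle, ← InnerProductGeometry.cos_angle_mul_norm_mul_norm, abs_mul,
    abs_of_nonneg (mul_nonneg (norm_nonneg x) (norm_nonneg y))]

theorem lineAngle_le_of_norm_mul_norm_mul_cos_le_abs_inner {x y : V} {θ : ℝ} (hx : x ≠ 0)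
    (hy : y ≠ 0) (hθ : 0 ≤ θ) (h : ‖x‖ * ‖y‖ * cos θ ≤ |⟪x, y⟫|) : lineAngle x y ≤ θ := by
  have cos_le : cos θ ≤ cos (lineAngle x y) := by
    rw [← cos_lineAngle_mul_norm_mul_norm, mul_comm] at h
    exact le_of_mul_le_mul_right h (mul_pos (norm_pos_iff.mpr hx) (norm_pos_iff.mpr hy))
  by_contra! lt_lineAngle
  exact cos_le.not_gt (cos_lt_cos_of_nonneg_of_le_pi hθ (lineAngle_le_pi x y) lt_lineAngle)

end LineAngle

theorem angles_near_degenerate_general {V P : Type*} [NormedAddCommGroup V]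
    [InnerProductSpace ℝ V] [MetricSpace P] [NormedAddTorsor V P] {θ : ℝ} (hθ : 0 ≤ θ) {u : V}
    (hu : ‖u‖ = 1) {T : Set P}
    (hT : ∀ p ∈ T, ∀ q ∈ T, p ≠ q → ‖q -ᵥ p‖ * cos θ ≤ |⟪q -ᵥ p, u⟫|)
    {a b c : P} (ha : a ∈ T) (hb : b ∈ T) (hc : c ∈ T) (hab : a ≠ b) (hbc : b ≠ c) :
    ∠ a b c ≤ 2 * θ ∨ π - 2 * θ ≤ ∠ a b c := by
  have hu0 : u ≠ 0 := norm_ne_zero_iff.mp (hu ▸ one_ne_zero)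
  have near_line : ∀ p ∈ T, b ≠ p → lineAngle (p -ᵥ b) u ≤ θ := fun p hp hbp =>
    lineAngle_le_of_norm_mul_norm_mul_cos_le_abs_inner (vsub_ne_zero.mpr hbp.symm) hu0 hθ
      (by simpa only [hu, mul_one] using hT b hb p hp hbp)
  refine lineAngle_le_iff.mp ?_
  calc
    lineAngle (a -ᵥ b) (c -ᵥ b) ≤ lineAngle (a -ᵥ b) u + lineAngle u (c -ᵥ b) :=
      lineAngle_le_lineAngle_add_lineAngle _ _ _
    _ = lineAngle (a -ᵥ b) u + lineAngle (c -ᵥ b) u := by rw [lineAngle_comm u]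
    _ ≤ θ + θ := add_le_add (near_line a ha hab.symm) (near_line c hc hbc)
    _ = 2 * θ := (two_mul θ).symm

/-- Final step of Proposition 3.1: if every segment determined by T makes an angle at most
θ < 45° with the line spanned by the unit vector u, then every angle determined by three
pairwise distinct points of T is within 2θ of 0° or 180°. -/
theorem angles_near_degenerate (θ : ℝ) (hθ0 : 0 ≤ θ) (hθ : θ < π / 4)
    (u : EuclideanSpace ℝ (Fin 2)) (hu : ‖u‖ = 1)
    (T : Set (EuclideanSpace ℝ (Fin 2)))
    (hT : ∀ P ∈ T, ∀ Q ∈ T, P ≠ Q → |⟪Q - P, u⟫| ≥ ‖Q - P‖ * Real.cos θ) :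
    ∀ A ∈ T, ∀ B ∈ T, ∀ C ∈ T, A ≠ B → B ≠ C → A ≠ C →
      ∠ A B C ≤ 2 * θ ∨ ∠ A B C ≥ π - 2 * θ :=
  fun _ hA _ hB _ hC hAB hBC _ => angles_near_degenerate_general hθ0 hu hT hA hB hC hAB hBC
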